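/- arXiv:2107.13698 — 11 statements merged into one kernel-verified Lean document; each statement's English description precedes it below -/
import Mathlib

section
/- Let 𝒜, ℬ, 𝒞 be categories each having a zero object, and let i^* : ℬ ⥤ 𝒜, i_* : 𝒜 ⥤ ℬ, j_! : 𝒞 ⥤ ℬ, j^* : ℬ ⥤ 𝒞 be functors such that (i^*, i_*) and (j_!, j^*) are adjoint pairs. If j^*(i_*(A)) is a zero object of 𝒞 for every object A of 𝒜, then i^*(j_!(Y)) is a zero object of 𝒜 for every object Y of 𝒞. -/
open CategoryTheory CategoryTheory.Limits

/-!
Composing the two adjunctions gives `i^* j_! ⊣ j^* i_*`, hence bijections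
`(i^* j_! Y ⟶ A) ≃ (Y ⟶ j^* i_* A)`. All right-hand sides are singletons exactly when every
`j^* i_* A` is terminal, all left-hand sides exactly when every `i^* j_! Y` is initial; in a
category with a zero object, an initial object is a zero object.
-/

section

variable {C D : Type*} [Category C] [Category D]

theorem nonempty_isInitial_iff_forall_nonempty_unique {X : C} :
    Nonempty (IsInitial X) ↔ ∀ Y : C, Nonempty (Unique (X ⟶ Y)) :=
  (isInitialEquivUnique (Functor.empty C) X).nonempty_congr.trans Classical.nonempty_pi

theorem nonempty_isTerminal_iff_forall_nonempty_unique {Y : C} :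
    Nonempty (IsTerminal Y) ↔ ∀ X : C, Nonempty (Unique (X ⟶ Y)) :=
  (isTerminalEquivUnique (Functor.empty C) Y).nonempty_congr.trans Classical.nonempty_pi

theorem forall_isInitial_leftAdjoint_obj_iff_forall_isTerminal_rightAdjoint_obj
    {F : C ⥤ D} {G : D ⥤ C} (adj : F ⊣ G) :
    (∀ X : C, Nonempty (IsInitial (F.obj X))) ↔ ∀ A : D, Nonempty (IsTerminal (G.obj A)) := by
  simp only [nonempty_isInitial_iff_forall_nonempty_unique,
    nonempty_isTerminal_iff_forall_nonempty_unique,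
    (adj.homEquiv _ _).uniqueCongr.nonempty_congr]
  exact forall_comm

theorem isZero_of_isInitial [HasZeroObject C] {X : C} (hX : IsInitial X) : IsZero X :=
  let ⟨_, hZ⟩ := HasZeroObject.zero (C := C)
  hZ.of_iso (hZ.isoIsInitial hX).symm

end

theorem stmt0_general {𝒜 ℬ 𝒞 : Type*} [Category 𝒜] [Category ℬ] [Category 𝒞]
    (iStar : ℬ ⥤ 𝒜) (iLow : 𝒜 ⥤ ℬ) (jShriek : 𝒞 ⥤ ℬ) (jStar : ℬ ⥤ 𝒞)
    (adj₁ : iStar ⊣ iLow) (adj₃ : jShriek ⊣ jStar)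
    (h : ∀ A : 𝒜, Nonempty (IsTerminal (jStar.obj (iLow.obj A)))) :
    ∀ Y : 𝒞, Nonempty (IsInitial (iStar.obj (jShriek.obj Y))) :=
  (forall_isInitial_leftAdjoint_obj_iff_forall_isTerminal_rightAdjoint_obj (adj₃.comp adj₁)).2 h

/-- Let `𝒜`, `ℬ`, `𝒞` be categories each having a zero object, with adjoint pairs
`(i^*, i_*)` and `(j_!, j^*)`.  If `j^*(i_*(A))` is a zero object for every `A`, then
`i^*(j_!(Y))` is a zero object for every `Y`. -/
theorem stmt0 {𝒜 ℬ 𝒞 : Type*} [Category 𝒜] [Category ℬ] [Category 𝒞]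
    [HasZeroObject 𝒜] [HasZeroObject ℬ] [HasZeroObject 𝒞]
    (iStar : ℬ ⥤ 𝒜) (iLow : 𝒜 ⥤ ℬ) (jShriek : 𝒞 ⥤ ℬ) (jStar : ℬ ⥤ 𝒞)
    (adj₁ : iStar ⊣ iLow) (adj₃ : jShriek ⊣ jStar)
    (h : ∀ A : 𝒜, IsZero (jStar.obj (iLow.obj A))) :
    ∀ Y : 𝒞, IsZero (iStar.obj (jShriek.obj Y)) := by
  intro Y
  obtain ⟨hY⟩ := stmt0_general iStar iLow jShriek jStar adj₁ adj₃ (fun A ↦ ⟨(h A).isTerminal⟩) Y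
  exact isZero_of_isInitial hY
end

section
/- Let (𝒜, ℬ, 𝒞) be a recollement of abelian categories and suppose i^* is exact. Then an object X of ℬ satisfies that i^*(X) is a zero object if and only if X lies in the essential image of j_!, i.e., X ≅ j_!(Y) for some object Y of 𝒞. -/
open CategoryTheory CategoryTheory.Limits

/-- A recollement of abelian categories. -/
structure AbelianRecollement (𝒜 : Type*) (ℬ : Type*) (𝒞 : Type*)
    [Category 𝒜] [Category ℬ] [Category 𝒞]
    [Abelian 𝒜] [Abelian ℬ] [Abelian 𝒞] where
  /-- i^* : ℬ ⥤ 𝒜 -/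
  iStar : ℬ ⥤ 𝒜
  /-- i_* : 𝒜 ⥤ ℬ -/
  iLow : 𝒜 ⥤ ℬ
  /-- i^! : ℬ ⥤ 𝒜 -/
  iShriek : ℬ ⥤ 𝒜
  /-- j_! : 𝒞 ⥤ ℬ -/
  jShriek : 𝒞 ⥤ ℬ
  /-- j^* : ℬ ⥤ 𝒞 -/
  jStar : ℬ ⥤ 𝒞
  /-- j_* : 𝒞 ⥤ ℬ -/
  jLow : 𝒞 ⥤ ℬ
  iStar_additive : iStar.Additive
  iLow_additive : iLow.Additive
  iShriek_additive : iShriek.Additive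
  jShriek_additive : jShriek.Additive
  jStar_additive : jStar.Additive
  jLow_additive : jLow.Additive
  /-- (i^*, i_*) is an adjoint pair -/
  adj₁ : iStar ⊣ iLow
  /-- (i_*, i^!) is an adjoint pair -/
  adj₂ : iLow ⊣ iShriek
  /-- (j_!, j^*) is an adjoint pair -/
  adj₃ : jShriek ⊣ jStar
  /-- (j^*, j_*) is an adjoint pair -/
  adj₄ : jStar ⊣ jLow
  iLow_full : iLow.Full
  iLow_faithful : iLow.Faithful
  jShriek_full : jShriek.Full
  jShriek_faithful : jShriek.Faithful
  jLow_full : jLow.Full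
  jLow_faithful : jLow.Faithful
  /-- j^* ∘ i_* = 0 -/
  jStar_iLow_zero : ∀ A : 𝒜, IsZero (jStar.obj (iLow.obj A))
  /-- i_* is exact -/
  iLow_preservesFiniteLimits : PreservesFiniteLimits iLow
  iLow_preservesFiniteColimits : PreservesFiniteColimits iLow
  /-- j^* is exact -/
  jStar_preservesFiniteLimits : PreservesFiniteLimits jStar
  jStar_preservesFiniteColimits : PreservesFiniteColimits jStar
  /-- the composite i_* i^! X ⟶ X ⟶ j_* j^* X vanishes -/
  comp_zero₁ : ∀ X : ℬ, adj₂.counit.app X ≫ adj₄.unit.app X = 0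
  /-- the sequence 0 ⟶ i_* i^! X ⟶ X ⟶ j_* j^* X is exact: the counit is a kernel of the
  unit -/
  exact₁ : ∀ X : ℬ, Nonempty (IsLimit (KernelFork.ofι (adj₂.counit.app X) (comp_zero₁ X)))
  /-- the composite j_! j^* X ⟶ X ⟶ i_* i^* X vanishes -/
  comp_zero₂ : ∀ X : ℬ, adj₃.counit.app X ≫ adj₁.unit.app X = 0
  /-- the sequence j_! j^* X ⟶ X ⟶ i_* i^* X ⟶ 0 is exact: the unit is a cokernel of the
  counit -/
  exact₂ : ∀ X : ℬ, Nonempty (IsColimit (CokernelCofork.ofπ (adj₁.unit.app X) (comp_zero₂ X)))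

/-!
By the exact sequence `j_! j^* X ⟶ X ⟶ i_* i^* X ⟶ 0`, an object killed by both `i^*` and `j^*` is
zero, so `i^*` and `j^*`, both preserving monomorphisms, jointly reflect them. They turn the counit
`j_! j^* X ⟶ X` into a morphism out of a zero object and an isomorphism, respectively, so the counit
is always a monomorphism. If `i^* X = 0` it is also an epimorphism, hence an isomorphism.
-/

section ZeroMorphisms

variable {C D : Type*} [Category* C] [Category* D] [HasZeroMorphisms C] [HasZeroMorphisms D]

theorem isZero_leftAdjoint_obj_of_unit_app_eq_zero {F : C ⥤ D} {G : D ⥤ C} (adj : F ⊣ G) {X : C}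
    (unit_eq_zero : adj.unit.app X = 0) : IsZero (F.obj X) := by
  have : G.IsRightAdjoint := adj.isRightAdjoint
  rw [IsZero.iff_id_eq_zero]
  apply (adj.homEquiv _ _).injective
  rw [adj.homEquiv_id, unit_eq_zero, adj.homEquiv_unit, G.map_zero, comp_zero]

theorem isZero_obj_kernel_of_mono_map (F : C ⥤ D) [F.PreservesZeroMorphisms]
    [F.PreservesMonomorphisms] {X Y : C} (f : X ⟶ Y) [HasKernel f] [Mono (F.map f)] :
    IsZero (F.obj (kernel f)) := by
  have map_ι_eq_zero : F.map (kernel.ι f) = 0 := by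
    rw [← cancel_mono (F.map f), ← F.map_comp, kernel.condition, F.map_zero, zero_comp]
  exact IsZero.of_mono_eq_zero _ map_ι_eq_zero

end ZeroMorphisms

theorem mono_of_mono_map_of_mono_map {C D E : Type*} [Category* C] [Category* D] [Category* E]
    [Preadditive C] [HasZeroMorphisms D] [HasZeroMorphisms E]
    (F : C ⥤ D) (G : C ⥤ E) [F.PreservesZeroMorphisms] [G.PreservesZeroMorphisms]
    [F.PreservesMonomorphisms] [G.PreservesMonomorphisms]
    (isZero_of_isZero_obj : ∀ X, IsZero (F.obj X) → IsZero (G.obj X) → IsZero X)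
    {X Y : C} (f : X ⟶ Y) [HasKernel f] [Mono (F.map f)] [Mono (G.map f)] : Mono f :=
  Preadditive.mono_of_isZero_kernel f <| isZero_of_isZero_obj _
    (isZero_obj_kernel_of_mono_map F f) (isZero_obj_kernel_of_mono_map G f)

section HalfRecollement

variable {𝒜 ℬ 𝒞 : Type*} [Category* 𝒜] [Category* ℬ] [Category* 𝒞]
  [HasZeroMorphisms 𝒜] {iStar : ℬ ⥤ 𝒜} {iLow : 𝒜 ⥤ ℬ}
  {jShriek : 𝒞 ⥤ ℬ} {jStar : ℬ ⥤ 𝒞} (adj₁ : iStar ⊣ iLow) (adj₃ : jShriek ⊣ jStar)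

theorem isZero_iStar_obj_of_epi_counit_app [HasZeroMorphisms ℬ] {X : ℬ}
    (w : adj₃.counit.app X ≫ adj₁.unit.app X = 0) [Epi (adj₃.counit.app X)] :
    IsZero (iStar.obj X) := by
  apply isZero_leftAdjoint_obj_of_unit_app_eq_zero adj₁
  rwa [← cancel_epi (adj₃.counit.app X), comp_zero]

theorem epi_counit_app_of_isZero_iStar_obj [Preadditive ℬ] {X : ℬ}
    {w : adj₃.counit.app X ≫ adj₁.unit.app X = 0}
    (hw : IsColimit (CokernelCofork.ofπ (adj₁.unit.app X) w)) (hX : IsZero (iStar.obj X)) :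
    Epi (adj₃.counit.app X) :=
  have : iLow.IsRightAdjoint := adj₁.isRightAdjoint
  Preadditive.epi_of_isZero_cokernel' _ hw (iLow.map_isZero hX)

variable [HasZeroMorphisms 𝒞]

theorem isZero_of_isZero_iStar_obj_of_isZero_jStar_obj [Preadditive ℬ] {X : ℬ}
    {w : adj₃.counit.app X ≫ adj₁.unit.app X = 0}
    (hw : IsColimit (CokernelCofork.ofπ (adj₁.unit.app X) w))
    (hi : IsZero (iStar.obj X)) (hj : IsZero (jStar.obj X)) : IsZero X :=
  have : jShriek.IsLeftAdjoint := adj₃.isLeftAdjoint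
  have := epi_counit_app_of_isZero_iStar_obj adj₁ adj₃ hw hi
  (jShriek.map_isZero hj).of_epi (adj₃.counit.app X)

variable [jShriek.Full] [jShriek.Faithful] [iStar.PreservesMonomorphisms]

theorem mono_counit_app [Preadditive ℬ] [HasKernels ℬ]
    {w : ∀ X, adj₃.counit.app X ≫ adj₁.unit.app X = 0}
    (hw : ∀ X, Nonempty (IsColimit (CokernelCofork.ofπ (adj₁.unit.app X) (w X)))) (X : ℬ) :
    Mono (adj₃.counit.app X) := by
  have : iStar.IsLeftAdjoint := adj₁.isLeftAdjoint
  have : jStar.IsRightAdjoint := adj₃.isRightAdjoint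
  have isZero_iStar_jShriek (Y : 𝒞) : IsZero (iStar.obj (jShriek.obj Y)) :=
    isZero_iStar_obj_of_epi_counit_app adj₁ adj₃ (w _)
  have : Mono (iStar.map (adj₃.counit.app X)) := (isZero_iStar_jShriek _).mono _
  exact mono_of_mono_map_of_mono_map iStar jStar
    (fun Z ↦ isZero_of_isZero_iStar_obj_of_isZero_jStar_obj adj₁ adj₃ (hw Z).some) _

theorem isIso_counit_app_iff_isZero_iStar_obj [Abelian ℬ]
    {w : ∀ X, adj₃.counit.app X ≫ adj₁.unit.app X = 0}
    (hw : ∀ X, Nonempty (IsColimit (CokernelCofork.ofπ (adj₁.unit.app X) (w X)))) {X : ℬ} :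
    IsIso (adj₃.counit.app X) ↔ IsZero (iStar.obj X) := by
  refine ⟨fun _ ↦ isZero_iStar_obj_of_epi_counit_app adj₁ adj₃ (w X), fun hX ↦ ?_⟩
  have := mono_counit_app adj₁ adj₃ hw X
  have := epi_counit_app_of_isZero_iStar_obj adj₁ adj₃ (hw X).some hX
  exact isIso_of_mono_of_epi _

theorem stmt5_general [Abelian ℬ]
    {w : ∀ X, adj₃.counit.app X ≫ adj₁.unit.app X = 0}
    (hw : ∀ X, Nonempty (IsColimit (CokernelCofork.ofπ (adj₁.unit.app X) (w X)))) (X : ℬ) :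
    IsZero (iStar.obj X) ↔ ∃ Y : 𝒞, Nonempty (X ≅ jShriek.obj Y) := by
  rw [← isIso_counit_app_iff_isZero_iStar_obj adj₁ adj₃ hw,
    adj₃.isIso_counit_app_iff_mem_essImage]
  exact exists_congr fun _ ↦ ⟨fun ⟨e⟩ ↦ ⟨e.symm⟩, fun ⟨e⟩ ↦ ⟨e.symm⟩⟩

end HalfRecollement

/-- In a recollement of abelian categories, if `i^*` is exact then `i^* X` is zero iff `X`
lies in the essential image of `j_!`. -/
theorem stmt5 {𝒜 ℬ 𝒞 : Type*} [Category 𝒜] [Category ℬ] [Category 𝒞]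
    [Abelian 𝒜] [Abelian ℬ] [Abelian 𝒞]
    (R : AbelianRecollement 𝒜 ℬ 𝒞)
    (h₁ : PreservesFiniteLimits R.iStar) (h₂ : PreservesFiniteColimits R.iStar)
    (X : ℬ) :
    IsZero (R.iStar.obj X) ↔ ∃ Y : 𝒞, Nonempty (X ≅ R.jShriek.obj Y) := by
  have := R.jShriek_full
  have := R.jShriek_faithful
  exact stmt5_general R.adj₁ R.adj₃ R.exact₂ X
end

section
/- Let (𝒜, ℬ, 𝒞) be a recollement of abelian categories and suppose i^! is exact. Then an object X of ℬ satisfies that i^!(X) is a zero object if and only if X lies in the essential image of j_*, i.e., X ≅ j_*(Y) for some object Y of 𝒞. -/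
open CategoryTheory CategoryTheory.Limits

/-!
The exact sequence `0 ⟶ i_* i^! X ⟶ X ⟶ j_* j^* X` shows that `i^! X = 0` exactly when the unit
`η : X ⟶ j_* j^* X` is a monomorphism, while `X` lies in the essential image of `j_*` exactly when
`η` is an isomorphism. It remains to see that `η` is always an epimorphism. Its cokernel `C` has
`j^* C = 0` because `j^* η` is invertible, and `i^! C = 0` because `i^!` preserves epimorphisms and
kills `j_* j^* X`; by the first remark `C` embeds into `j_* j^* C = 0`.
-/

section

variable {𝒟 ℰ : Type*} [Category 𝒟] [Category ℰ] [HasZeroMorphisms 𝒟]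

theorem isZero_rightAdjoint_obj_iff_counit_app_eq_zero [HasZeroMorphisms ℰ]
    {F : 𝒟 ⥤ ℰ} {G : ℰ ⥤ 𝒟} (adj : F ⊣ G) (X : ℰ) :
    IsZero (G.obj X) ↔ adj.counit.app X = 0 := by
  have := adj.isLeftAdjoint
  have := adj.isRightAdjoint
  refine ⟨fun hX ↦ (F.map_isZero hX).eq_zero_of_src _, fun hX ↦ ?_⟩
  rw [IsZero.iff_id_eq_zero, ← adj.right_triangle_components X, hX, G.map_zero, comp_zero]

theorem isZero_rightAdjoint_obj_iff_mono_of_isLimit_counit [Preadditive ℰ]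
    {F : 𝒟 ⥤ ℰ} {G : ℰ ⥤ 𝒟} (adj : F ⊣ G) {X Y : ℰ} {f : X ⟶ Y}
    {w : adj.counit.app X ≫ f = 0} (hf : IsLimit (KernelFork.ofι (adj.counit.app X) w)) :
    IsZero (G.obj X) ↔ Mono f := by
  have := adj.isLeftAdjoint
  refine ⟨fun hX ↦ Preadditive.mono_of_isZero_kernel' _ hf (F.map_isZero hX), fun _ ↦ ?_⟩
  rw [isZero_rightAdjoint_obj_iff_counit_app_eq_zero adj]
  exact zero_of_comp_mono f w

theorem isZero_obj_cokernel_of_epi_map [HasZeroMorphisms ℰ] (F : 𝒟 ⥤ ℰ)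
    [F.PreservesZeroMorphisms] [F.PreservesEpimorphisms] {X Y : 𝒟} (f : X ⟶ Y) [HasCokernel f]
    [Epi (F.map f)] : IsZero (F.obj (cokernel f)) := by
  have hπ : F.map (cokernel.π f) = 0 := by
    rw [← comp_eq_zero_iff_of_epi (F.map f), ← F.map_comp, cokernel.condition, F.map_zero]
  exact IsZero.of_epi_eq_zero _ hπ

end

section

variable {𝒜 ℬ 𝒞 : Type*} [Category 𝒜] [Category ℬ] [Category 𝒞]
  [HasZeroMorphisms 𝒜] [Abelian ℬ] [HasZeroMorphisms 𝒞]
  {iLow : 𝒜 ⥤ ℬ} {iShriek : ℬ ⥤ 𝒜} {jStar : ℬ ⥤ 𝒞} {jLow : 𝒞 ⥤ ℬ}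
  [jLow.Full] [jLow.Faithful] [iShriek.PreservesEpimorphisms]

theorem epi_unit_app_of_isLimit_counit (adj : iLow ⊣ iShriek) (adj' : jStar ⊣ jLow)
    (w : ∀ X, adj.counit.app X ≫ adj'.unit.app X = 0)
    (hker : ∀ X, Nonempty (IsLimit (KernelFork.ofι (adj.counit.app X) (w X)))) (X : ℬ) :
    Epi (adj'.unit.app X) := by
  have := adj'.isLeftAdjoint
  have := adj'.isRightAdjoint
  have isZero_iShriek_iff (Y : ℬ) : IsZero (iShriek.obj Y) ↔ Mono (adj'.unit.app Y) :=
    isZero_rightAdjoint_obj_iff_mono_of_isLimit_counit adj (hker Y).some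
  let C := cokernel (adj'.unit.app X)
  have isZero_jStar : IsZero (jStar.obj C) :=
    isZero_obj_cokernel_of_epi_map jStar (adj'.unit.app X)
  have isZero_iShriek : IsZero (iShriek.obj C) :=
    IsZero.of_epi (iShriek.map (cokernel.π (adj'.unit.app X)))
      ((isZero_iShriek_iff (jLow.obj (jStar.obj X))).2 inferInstance)
  have : Mono (adj'.unit.app C) := (isZero_iShriek_iff C).1 isZero_iShriek
  exact Preadditive.epi_of_isZero_cokernel _
    (IsZero.of_mono (adj'.unit.app C) (jLow.map_isZero isZero_jStar))

theorem stmt6_general (adj : iLow ⊣ iShriek) (adj' : jStar ⊣ jLow)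
    (w : ∀ X, adj.counit.app X ≫ adj'.unit.app X = 0)
    (hker : ∀ X, Nonempty (IsLimit (KernelFork.ofι (adj.counit.app X) (w X)))) (X : ℬ) :
    IsZero (iShriek.obj X) ↔ jLow.essImage X := by
  have := epi_unit_app_of_isLimit_counit adj adj' w hker X
  calc
    IsZero (iShriek.obj X) ↔ Mono (adj'.unit.app X) :=
      isZero_rightAdjoint_obj_iff_mono_of_isLimit_counit adj (hker X).some
    _ ↔ IsIso (adj'.unit.app X) := ⟨fun _ ↦ isIso_of_mono_of_epi _, fun _ ↦ inferInstance⟩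
    _ ↔ jLow.essImage X := adj'.isIso_unit_app_iff_mem_essImage

end

/-- In a recollement of abelian categories, if `i^!` is exact then `i^! X` is zero iff `X`
lies in the essential image of `j_*`. -/
theorem stmt6 {𝒜 ℬ 𝒞 : Type*} [Category 𝒜] [Category ℬ] [Category 𝒞]
    [Abelian 𝒜] [Abelian ℬ] [Abelian 𝒞]
    (R : AbelianRecollement 𝒜 ℬ 𝒞)
    (h₁ : PreservesFiniteLimits R.iShriek) (h₂ : PreservesFiniteColimits R.iShriek)
    (X : ℬ) :
    IsZero (R.iShriek.obj X) ↔ ∃ Y : 𝒞, Nonempty (X ≅ R.jLow.obj Y) := by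
  have := R.jLow_full
  have := R.jLow_faithful
  rw [stmt6_general R.adj₂ R.adj₄ R.comp_zero₁ R.exact₁ X]
  exact exists_congr fun _ ↦ ⟨fun ⟨e⟩ ↦ ⟨e.symm⟩, fun ⟨e⟩ ↦ ⟨e.symm⟩⟩
end

section
/- Let (𝒜, ℬ, 𝒞) be a recollement of abelian categories. If i^! is exact, then j_* is exact; that is, j_* (which, being a right adjoint, is automatically left exact) also preserves finite colimits. -/
open CategoryTheory CategoryTheory.Limits

/-!
Write `i`, `iR`, `j`, `jR` for `i_*`, `i^!`, `j^*`, `j_*`. By exactness of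
`i (iR X) ⟶ X ⟶ jR (j X)`, an object killed by both `iR` and `j` is zero; and `iR (jR Z) = 0`,
because for `X = jR Z` the second map is invertible, so the first one vanishes. Let `f : Y ⟶ Z` be
an epimorphism and `K` the cokernel of `jR f`. Then `j K` is the cokernel of `j (jR f) ≅ f`, hence
zero, while `iR K` is a quotient of `iR (jR Z) = 0` because `iR` preserves epimorphisms. So `K = 0`:
the left exact functor `jR` preserves epimorphisms, and is therefore exact.
-/

section Adjunction

variable {C D : Type*} [Category C] [Category D] {F : C ⥤ D} {G : D ⥤ C}

theorem isZero_rightAdjoint_obj_of_counit_app_eq_zero [HasZeroMorphisms C] [HasZeroMorphisms D]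
    (adj : F ⊣ G) {Y : D} (h : adj.counit.app Y = 0) : IsZero (G.obj Y) := by
  have := adj.isRightAdjoint
  rw [IsZero.iff_id_eq_zero, ← adj.right_triangle_components, h, G.map_zero, comp_zero]

theorem epi_leftAdjoint_map_rightAdjoint_map (adj : F ⊣ G) [G.Full] [G.Faithful]
    {X Y : D} (f : X ⟶ Y) [Epi f] : Epi (F.map (G.map f)) :=
  (Functor.PreservesEpimorphisms.of_iso (asIso adj.counit).symm).preserves f

theorem isZero_leftAdjoint_obj_cokernel_rightAdjoint_map [HasZeroMorphisms C]
    [HasZeroMorphisms D] (adj : F ⊣ G) [G.Full] [G.Faithful] {X Y : D} (f : X ⟶ Y) [Epi f]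
    [HasCokernel (G.map f)] : IsZero (F.obj (cokernel (G.map f))) := by
  have := adj.isLeftAdjoint
  have := epi_leftAdjoint_map_rightAdjoint_map adj f
  have map_π_eq_zero : F.map (cokernel.π (G.map f)) = 0 := by
    rw [← cancel_epi (F.map (G.map f)), ← F.map_comp, cokernel.condition, F.map_zero, comp_zero]
  exact IsZero.of_epi_eq_zero _ map_π_eq_zero

end Adjunction

theorem preservesFiniteColimits_of_preservesEpis_and_finiteLimits {C D : Type*} [Category C]
    [Category D] [Abelian C] [Abelian D] (F : C ⥤ D) [F.PreservesEpimorphisms]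
    [PreservesFiniteLimits F] : PreservesFiniteColimits F := by
  have := F.additive_of_preserves_binary_products
  have := F.preservesHomology_of_preservesEpis_and_kernels
  exact F.preservesFiniteColimits_of_preservesHomology

section HalfRecollement

variable {𝒜 ℬ 𝒞 : Type*} [Category 𝒜] [Category ℬ] [Category 𝒞] [HasZeroMorphisms 𝒜]
  {i : 𝒜 ⥤ ℬ} {iR : ℬ ⥤ 𝒜} {j : ℬ ⥤ 𝒞} {jR : 𝒞 ⥤ ℬ}

theorem isZero_rightAdjoint_obj_rightAdjoint_obj_of_counit_comp_unit_eq_zero [HasZeroMorphisms ℬ]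
    (adjI : i ⊣ iR) (adjJ : j ⊣ jR) [jR.Full] [jR.Faithful] {Z : 𝒞}
    (w : adjI.counit.app (jR.obj Z) ≫ adjJ.unit.app (jR.obj Z) = 0) :
    IsZero (iR.obj (jR.obj Z)) := by
  apply isZero_rightAdjoint_obj_of_counit_app_eq_zero adjI
  rwa [← cancel_mono (adjJ.unit.app (jR.obj Z)), zero_comp]

theorem isZero_of_exact_counit_unit [HasZeroMorphisms ℬ] [HasZeroMorphisms 𝒞]
    (adjI : i ⊣ iR) (adjJ : j ⊣ jR) {X : ℬ} {w : adjI.counit.app X ≫ adjJ.unit.app X = 0}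
    (hX : (ShortComplex.mk _ _ w).Exact) (hi : IsZero (iR.obj X)) (hj : IsZero (j.obj X)) :
    IsZero X := by
  have := adjI.isLeftAdjoint
  have := adjJ.isRightAdjoint
  exact hX.isZero_of_both_isZero (i.map_isZero hi) (jR.map_isZero hj)

theorem preservesEpimorphisms_of_exact_counit_unit [Preadditive ℬ] [HasCokernels ℬ]
    [HasZeroMorphisms 𝒞] (adjI : i ⊣ iR) (adjJ : j ⊣ jR) [jR.Full] [jR.Faithful]
    [iR.PreservesEpimorphisms] (w : ∀ X, adjI.counit.app X ≫ adjJ.unit.app X = 0)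
    (hX : ∀ X, (ShortComplex.mk _ _ (w X)).Exact) : jR.PreservesEpimorphisms where
  preserves {_ Z} f _ := by
    have hj : IsZero (j.obj (cokernel (jR.map f))) :=
      isZero_leftAdjoint_obj_cokernel_rightAdjoint_map adjJ f
    have hZ : IsZero (iR.obj (jR.obj Z)) :=
      isZero_rightAdjoint_obj_rightAdjoint_obj_of_counit_comp_unit_eq_zero adjI adjJ (w _)
    have hi : IsZero (iR.obj (cokernel (jR.map f))) :=
      hZ.of_epi (iR.map (cokernel.π (jR.map f)))
    exact Preadditive.epi_of_isZero_cokernel _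
      (isZero_of_exact_counit_unit adjI adjJ (hX _) hi hj)

end HalfRecollement

theorem stmt8_general {𝒜 ℬ 𝒞 : Type*} [Category 𝒜] [Category ℬ] [Category 𝒞]
    [HasZeroMorphisms 𝒜] [Abelian ℬ] [Abelian 𝒞]
    {i : 𝒜 ⥤ ℬ} {iR : ℬ ⥤ 𝒜} {j : ℬ ⥤ 𝒞} {jR : 𝒞 ⥤ ℬ} (adjI : i ⊣ iR) (adjJ : j ⊣ jR)
    [jR.Full] [jR.Faithful] [iR.PreservesEpimorphisms]
    (w : ∀ X, adjI.counit.app X ≫ adjJ.unit.app X = 0)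
    (hX : ∀ X, (ShortComplex.mk _ _ (w X)).Exact) :
    PreservesFiniteColimits jR := by
  have : PreservesLimitsOfSize.{0, 0} jR := adjJ.rightAdjoint_preservesLimits
  have := preservesEpimorphisms_of_exact_counit_unit adjI adjJ w hX
  exact preservesFiniteColimits_of_preservesEpis_and_finiteLimits jR

/-- In a recollement of abelian categories, if `i^!` is exact then `j_*` is exact, i.e. `j_*`
also preserves finite colimits. -/
theorem stmt8 {𝒜 ℬ 𝒞 : Type*} [Category 𝒜] [Category ℬ] [Category 𝒞]
    [Abelian 𝒜] [Abelian ℬ] [Abelian 𝒞]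
    (R : AbelianRecollement 𝒜 ℬ 𝒞)
    (h₁ : PreservesFiniteLimits R.iShriek) (h₂ : PreservesFiniteColimits R.iShriek) :
    PreservesFiniteColimits R.jLow := by
  have := R.jLow_full
  have := R.jLow_faithful
  exact stmt8_general R.adj₂ R.adj₄ R.comp_zero₁ fun X =>
    ShortComplex.exact_of_f_is_kernel _ (R.exact₁ X).some
end

section
/- Let (𝒜, ℬ, 𝒞) be a recollement of abelian categories. If i^! is exact, then for every object X of ℬ the unit η_X : X → j_* j^* X of the adjunction (j^*, j_*) is an epimorphism, so that 0 → i_* i^! X → X → j_* j^* X → 0 is a short exact sequence in ℬ, the first map being the counit of (i_*, i^!) at X. -/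
open CategoryTheory CategoryTheory.Limits

/-!
Let `π : j_* j^* X ⟶ Q` be the cokernel of `η_X`. The unit at `j_* j^* X` is monic, so the counit
`i_* i^! ⟶ 𝟙` vanishes there. As `i^!` preserves epimorphisms, the objects at which this counit
vanishes are closed under quotients; hence it vanishes at `Q`, which makes `η_Q` monic. But
`π ≫ η_Q` is a map `j_* j^* X ⟶ j_* j^* Q` killed by `η_X`, hence zero because `j_*` is full.
So `π = 0`.
-/

section Adjunction

variable {C D : Type*} [Category C] [Category D] {L : C ⥤ D} {R : D ⥤ C}

theorem unit_app_comp_left_cancel (adj : L ⊣ R) [R.Full] {X : C} {Y : D}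
    {f g : R.obj (L.obj X) ⟶ R.obj Y} (h : adj.unit.app X ≫ f = adj.unit.app X ≫ g) : f = g := by
  obtain ⟨f, rfl⟩ := R.map_surjective f
  obtain ⟨g, rfl⟩ := R.map_surjective g
  have : f = g := (adj.homEquiv X Y).injective (by simpa only [adj.homEquiv_unit] using h)
  rw [this]

theorem mono_unit_app_obj (adj : L ⊣ R) (Y : D) : Mono (adj.unit.app (R.obj Y)) :=
  (SplitMono.mk _ (adj.right_triangle_components Y)).mono

theorem counit_app_eq_zero_of_epi [HasZeroMorphisms D] (adj : L ⊣ R) [R.PreservesEpimorphisms]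
    {X Y : D} (f : X ⟶ Y) [Epi f] (hX : adj.counit.app X = 0) : adj.counit.app Y = 0 := by
  have := adj.isLeftAdjoint
  have comp_counit : L.map (R.map f) ≫ adj.counit.app Y = 0 :=
    (adj.counit_naturality f).trans (by rw [hX, zero_comp])
  exact zero_of_epi_comp _ comp_counit

theorem epi_unit_app_of_mono_unit_app_cokernel [Preadditive C] (adj : L ⊣ R) [R.Full] (X : C)
    [HasCokernel (adj.unit.app X)] [Mono (adj.unit.app (cokernel (adj.unit.app X)))] :
    Epi (adj.unit.app X) := by
  let π := cokernel.π (adj.unit.app X)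
  have comp_unit : π ≫ adj.unit.app (cokernel (adj.unit.app X)) = 0 := by
    apply unit_app_comp_left_cancel adj
    rw [cokernel.condition_assoc, zero_comp, comp_zero]
  exact Preadditive.epi_of_cokernel_zero (zero_of_comp_mono _ comp_unit)

end Adjunction

section ExactCounitUnit

variable {𝒜 ℬ 𝒞 : Type*} [Category 𝒜] [Category ℬ] [Category 𝒞]
  {i : 𝒜 ⥤ ℬ} {r : ℬ ⥤ 𝒜} {l : ℬ ⥤ 𝒞} {j : 𝒞 ⥤ ℬ} [r.PreservesEpimorphisms] [j.Full]

theorem epi_unit_app_of_exact [Preadditive ℬ] [HasCokernels ℬ] (adj : i ⊣ r) (adj' : l ⊣ j)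
    (w : ∀ X, adj.counit.app X ≫ adj'.unit.app X = 0)
    (hexact : ∀ X, (ShortComplex.mk _ _ (w X)).Exact) (X : ℬ) : Epi (adj'.unit.app X) := by
  let Y := j.obj (l.obj X)
  let Q := cokernel (adj'.unit.app X)
  have counit_Y : adj.counit.app Y = 0 :=
    have := mono_unit_app_obj adj' (l.obj X)
    zero_of_comp_mono _ (w Y)
  have counit_Q : adj.counit.app Q = 0 :=
    counit_app_eq_zero_of_epi adj (cokernel.π (adj'.unit.app X)) counit_Y
  have : Mono (adj'.unit.app Q) := (hexact Q).mono_g counit_Q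
  exact epi_unit_app_of_mono_unit_app_cokernel adj' X

theorem stmt9_general [Abelian ℬ] (adj : i ⊣ r) (adj' : l ⊣ j)
    (w : ∀ X, adj.counit.app X ≫ adj'.unit.app X = 0)
    (hkernel : ∀ X, Nonempty (IsLimit (KernelFork.ofι (adj.counit.app X) (w X)))) (X : ℬ) :
    Epi (adj'.unit.app X) ∧ (ShortComplex.mk _ _ (w X)).ShortExact := by
  have hexact (Y : ℬ) : (ShortComplex.mk _ _ (w Y)).Exact :=
    ShortComplex.exact_of_f_is_kernel _ (hkernel Y).some
  have hmono : Mono (adj.counit.app X) := Fork.IsLimit.mono (hkernel X).some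
  have hepi : Epi (adj'.unit.app X) := epi_unit_app_of_exact adj adj' w hexact X
  exact ⟨hepi, .mk' (hexact X) hmono hepi⟩

end ExactCounitUnit

/-- In a recollement of abelian categories, if `i^!` is exact then for every `X : ℬ` the
unit `η_X : X ⟶ j_* j^* X` is an epimorphism, so that
`0 ⟶ i_* i^! X ⟶ X ⟶ j_* j^* X ⟶ 0` is a short exact sequence. -/
theorem stmt9 {𝒜 ℬ 𝒞 : Type*} [Category 𝒜] [Category ℬ] [Category 𝒞]
    [Abelian 𝒜] [Abelian ℬ] [Abelian 𝒞]
    (R : AbelianRecollement 𝒜 ℬ 𝒞)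
    (h₁ : PreservesFiniteLimits R.iShriek) (h₂ : PreservesFiniteColimits R.iShriek)
    (X : ℬ) :
    Epi (R.adj₄.unit.app X) ∧
    (ShortComplex.mk (R.adj₂.counit.app X) (R.adj₄.unit.app X)
      (R.comp_zero₁ X)).ShortExact := by
  have := R.jLow_full
  exact stmt9_general R.adj₂ R.adj₄ R.comp_zero₁ R.exact₁ X
end

section
/- Let (𝒜, ℬ, 𝒞) be a recollement of abelian categories, and let W be the class of morphisms f of ℬ such that j^*(f) is an isomorphism. Then j^* : ℬ ⥤ 𝒞 exhibits 𝒞 as the localization of ℬ at W; that is, j^* sends every morphism of W to an isomorphism, and the induced functor from the Gabriel–Zisman localization ℬ[W⁻¹] to 𝒞 is an equivalence of categories. -/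
open CategoryTheory CategoryTheory.Limits

attribute [instance] AbelianRecollement.jLow_full AbelianRecollement.jLow_faithful

/-- In a recollement of abelian categories, `j^* : ℬ ⥤ 𝒞` exhibits `𝒞` as the localization
of `ℬ` at the class of morphisms that `j^*` sends to isomorphisms. -/
theorem stmt11 {𝒜 ℬ 𝒞 : Type*} [Category 𝒜] [Category ℬ] [Category 𝒞]
    [Abelian 𝒜] [Abelian ℬ] [Abelian 𝒞]
    (R : AbelianRecollement 𝒜 ℬ 𝒞) :
    R.jStar.IsLocalization ((MorphismProperty.isomorphisms 𝒞).inverseImage R.jStar) :=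
  -- As `j_*` is fully faithful, `j^*` inverts each unit `X ⟶ j_* j^* X`, so these units lie in `W`
  -- and `𝒞 ⥤ ℬ ⥤ ℬ[W⁻¹]` is a quasi-inverse of the functor induced by `j^*`.
  R.adj₄.isLocalization
end

section
/- Let (𝒜, ℬ, 𝒞) be a recollement of triangulated categories, and let W be the class of morphisms f of ℬ such that j^*(f) is an isomorphism. Then j^* : ℬ ⥤ 𝒞 exhibits 𝒞 as the localization of ℬ at W; that is, j^* sends every morphism of W to an isomorphism, and the induced functor from the localization ℬ[W⁻¹] to 𝒞 is an equivalence of categories. -/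
open CategoryTheory CategoryTheory.Limits CategoryTheory.Pretriangulated

/-- A recollement of triangulated categories. -/
structure TriangulatedRecollement (𝒜 ℬ 𝒞 : Type*) [Category 𝒜] [Category ℬ] [Category 𝒞]
    [HasZeroObject 𝒜] [HasZeroObject ℬ] [HasZeroObject 𝒞]
    [Preadditive 𝒜] [Preadditive ℬ] [Preadditive 𝒞]
    [HasShift 𝒜 ℤ] [HasShift ℬ ℤ] [HasShift 𝒞 ℤ]
    [∀ n : ℤ, (shiftFunctor 𝒜 n).Additive] [∀ n : ℤ, (shiftFunctor ℬ n).Additive]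
    [∀ n : ℤ, (shiftFunctor 𝒞 n).Additive]
    [Pretriangulated 𝒜] [Pretriangulated ℬ] [Pretriangulated 𝒞] where
  /-- i^* : ℬ ⥤ 𝒜 -/
  iStar : ℬ ⥤ 𝒜
  /-- i_* : 𝒜 ⥤ ℬ -/
  iLow : 𝒜 ⥤ ℬ
  /-- i^! : ℬ ⥤ 𝒜 -/
  iShriek : ℬ ⥤ 𝒜
  /-- j_! : 𝒞 ⥤ ℬ -/
  jShriek : 𝒞 ⥤ ℬ
  /-- j^* : ℬ ⥤ 𝒞 -/
  jStar : ℬ ⥤ 𝒞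
  /-- j_* : 𝒞 ⥤ ℬ -/
  jLow : 𝒞 ⥤ ℬ
  iStar_additive : iStar.Additive
  iLow_additive : iLow.Additive
  iShriek_additive : iShriek.Additive
  jShriek_additive : jShriek.Additive
  jStar_additive : jStar.Additive
  jLow_additive : jLow.Additive
  /-- the six functors commute with the shift -/
  iStar_commShift : iStar.CommShift ℤ
  iLow_commShift : iLow.CommShift ℤ
  iShriek_commShift : iShriek.CommShift ℤ
  jShriek_commShift : jShriek.CommShift ℤ
  jStar_commShift : jStar.CommShift ℤ
  jLow_commShift : jLow.CommShift ℤ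
  /-- the six functors are triangulated (send distinguished triangles to distinguished
  triangles) -/
  iStar_isTriangulated : letI := iStar_commShift; iStar.IsTriangulated
  iLow_isTriangulated : letI := iLow_commShift; iLow.IsTriangulated
  iShriek_isTriangulated : letI := iShriek_commShift; iShriek.IsTriangulated
  jShriek_isTriangulated : letI := jShriek_commShift; jShriek.IsTriangulated
  jStar_isTriangulated : letI := jStar_commShift; jStar.IsTriangulated
  jLow_isTriangulated : letI := jLow_commShift; jLow.IsTriangulated
  /-- (i^*, i_*) is an adjoint pair -/
  adj₁ : iStar ⊣ iLow
  /-- (i_*, i^!) is an adjoint pair -/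
  adj₂ : iLow ⊣ iShriek
  /-- (j_!, j^*) is an adjoint pair -/
  adj₃ : jShriek ⊣ jStar
  /-- (j^*, j_*) is an adjoint pair -/
  adj₄ : jStar ⊣ jLow
  iLow_full : iLow.Full
  iLow_faithful : iLow.Faithful
  jShriek_full : jShriek.Full
  jShriek_faithful : jShriek.Faithful
  jLow_full : jLow.Full
  jLow_faithful : jLow.Faithful
  /-- j^* ∘ i_* ≅ 0 -/
  jStar_iLow_zero : ∀ A : 𝒜, IsZero (jStar.obj (iLow.obj A))
  /-- for every `X : ℬ` there is a distinguished triangle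
  `j_! j^* X ⟶ X ⟶ i_* i^* X ⟶ (j_! j^* X)⟦1⟧` -/
  triangle₁ : ∀ X : ℬ, ∃ d : iLow.obj (iStar.obj X) ⟶ (jShriek.obj (jStar.obj X))⟦(1 : ℤ)⟧,
    Triangle.mk (adj₃.counit.app X) (adj₁.unit.app X) d ∈ distTriang ℬ
  /-- for every `X : ℬ` there is a distinguished triangle
  `i_* i^! X ⟶ X ⟶ j_* j^* X ⟶ (i_* i^! X)⟦1⟧` -/
  triangle₂ : ∀ X : ℬ, ∃ d : jLow.obj (jStar.obj X) ⟶ (iLow.obj (iShriek.obj X))⟦(1 : ℤ)⟧,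
    Triangle.mk (adj₂.counit.app X) (adj₄.unit.app X) d ∈ distTriang ℬ

attribute [instance] TriangulatedRecollement.jLow_full TriangulatedRecollement.jLow_faithful

/-- In a recollement of triangulated categories, `j^* : ℬ ⥤ 𝒞` exhibits `𝒞` as the
localization of `ℬ` at the class of morphisms that `j^*` sends to isomorphisms. -/
theorem stmt12 {𝒜 ℬ 𝒞 : Type*} [Category 𝒜] [Category ℬ] [Category 𝒞]
    [HasZeroObject 𝒜] [HasZeroObject ℬ] [HasZeroObject 𝒞]
    [Preadditive 𝒜] [Preadditive ℬ] [Preadditive 𝒞]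
    [HasShift 𝒜 ℤ] [HasShift ℬ ℤ] [HasShift 𝒞 ℤ]
    [∀ n : ℤ, (shiftFunctor 𝒜 n).Additive] [∀ n : ℤ, (shiftFunctor ℬ n).Additive]
    [∀ n : ℤ, (shiftFunctor 𝒞 n).Additive]
    [Pretriangulated 𝒜] [Pretriangulated ℬ] [Pretriangulated 𝒞]
    (R : TriangulatedRecollement 𝒜 ℬ 𝒞) :
    R.jStar.IsLocalization ((MorphismProperty.isomorphisms 𝒞).inverseImage R.jStar) :=
  R.adj₄.isLocalization
end

section
/- Let (𝒜, ℬ, 𝒞) be a recollement of abelian categories and suppose 𝒞 has enough projective objects. For an object B of ℬ the following are equivalent: (a) there exist projective objects P₁, P₀ of 𝒞 and an exact sequence j_!(P₁) → j_!(P₀) → B → 0 in ℬ; (b) Hom_ℬ(B, i_*(A)) = 0 for every object A of 𝒜, and every short exact sequence 0 → i_*(A) → E → B → 0 in ℬ (with A an object of 𝒜) splits. -/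
open CategoryTheory CategoryTheory.Limits

/- Write `⊥S` for the class of objects `B` with `Hom(B, S) = 0 = Ext¹(B, S)`. For a short exact
sequence `0 ⟶ K ⟶ P₀ ⟶ B ⟶ 0` with `P₀` in `⊥S` we have `Hom(B, S) = 0`, and the exact sequence
`0 = Hom(P₀, A) ⟶ Hom(K, A) ⟶ Ext¹(B, A) ⟶ Ext¹(P₀, A) = 0` shows that `B` lies in `⊥S` if and
only if `Hom(K, S) = 0`. In the recollement take `S` to be the objects `i_* A`. Since `j^* i_* = 0`,
every `j_! P` with `P` projective lies in `⊥S`, and the exact sequence `j_! j^* X ⟶ X ⟶ i_* i^* X`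
shows that `X` is a quotient of such a `j_! P` as soon as `Hom(X, S) = 0`; this is applied to `B`
and to `K`. -/

section Extensions

variable {ℬ : Type*} [Category ℬ] [Abelian ℬ]

/-- Every extension of `B` by `A` splits, i.e. the Yoneda `Ext¹(B, A)` vanishes; phrased without
`Ext` groups, whose construction would require choosing a universe. -/
def ExtensionsSplit (B A : ℬ) : Prop :=
  ∀ (E : ℬ) (f : A ⟶ E) (g : E ⟶ B) (w : f ≫ g = 0),
    (ShortComplex.mk f g w).ShortExact → ∃ s : B ⟶ E, s ≫ g = 𝟙 B

/-- The left perpendicular class `⊥S`, in the sense of Geigle and Lenzing: the objects `B` with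
`Hom(B, A) = 0 = Ext¹(B, A)` for all `A` in `S`. -/
def leftPerpendicular (S : ObjectProperty ℬ) : ObjectProperty ℬ :=
  fun B ↦ S.leftOrthogonal B ∧ ∀ ⦃A : ℬ⦄, S A → ExtensionsSplit B A

/-- The objects `B` with a presentation `P₁ ⟶ P₀ ⟶ B ⟶ 0` by objects of the class `P`. -/
def HasPresentation (P : ObjectProperty ℬ) : ObjectProperty ℬ :=
  fun B ↦ ∃ (P₁ P₀ : ℬ) (_ : P P₁) (_ : P P₀) (f : P₁ ⟶ P₀) (g : P₀ ⟶ B) (w : f ≫ g = 0),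
    Epi g ∧ (ShortComplex.mk f g w).Exact

theorem extensionsSplit_of_projective (B A : ℬ) [Projective B] : ExtensionsSplit B A := by
  intro E f g w hE
  have : Epi g := hE.epi_g
  exact ⟨Projective.factorThru (𝟙 B) g, Projective.factorThru_comp (𝟙 B) g⟩

theorem shortExact_pushout {T : ShortComplex ℬ} (hT : T.ShortExact) {A : ℬ} (u : T.X₁ ⟶ A) :
    (ShortComplex.mk (pushout.inl u T.f) (pushout.desc 0 T.g (by simp))
      (pushout.inl_desc _ _ _)).ShortExact := by
  have : Mono T.f := hT.mono_f
  have : Epi T.g := hT.epi_g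
  have hdesc : pushout.inr u T.f ≫ pushout.desc 0 T.g (by simp) = T.g := pushout.inr_desc _ _ _
  have := epi_of_epi_fac hdesc
  refine .mk' (ShortComplex.exact_of_g_is_cokernel _ ?_) inferInstance this
  refine CokernelCofork.IsColimit.ofπ' _ (pushout.inl_desc _ _ _) fun k hk ↦ ?_
  have hzero : T.f ≫ pushout.inr u T.f ≫ k = 0 := by
    rw [← pushout.condition_assoc, hk, comp_zero]
  refine ⟨hT.exact.desc _ hzero, pushout.hom_ext ?_ ?_⟩
  · rw [pushout.inl_desc_assoc, zero_comp, hk]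
  · rw [pushout.inr_desc_assoc, hT.exact.g_desc]

theorem shortExact_pullback {T : ShortComplex ℬ} (hT : T.ShortExact) {X : ℬ} (v : X ⟶ T.X₃) :
    (ShortComplex.mk (pullback.lift T.f 0 (by simp)) (pullback.snd T.g v)
      (pullback.lift_snd _ _ _)).ShortExact := by
  have : Mono T.f := hT.mono_f
  have : Epi T.g := hT.epi_g
  have hlift : pullback.lift T.f 0 (by simp) ≫ pullback.fst T.g v = T.f := pullback.lift_fst _ _ _
  have := mono_of_mono_fac hlift
  refine .mk' (ShortComplex.exact_of_f_is_kernel _ ?_) this inferInstance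
  refine KernelFork.IsLimit.ofι' _ (pullback.lift_snd _ _ _) fun k hk ↦ ?_
  have hzero : (k ≫ pullback.fst T.g v) ≫ T.g = 0 := by
    rw [Category.assoc, pullback.condition, reassoc_of% hk, zero_comp]
  refine ⟨hT.exact.lift _ hzero, pullback.hom_ext ?_ ?_⟩
  · rw [Category.assoc, pullback.lift_fst, hT.exact.lift_f]
  · rw [Category.assoc, pullback.lift_snd, comp_zero, hk]

theorem ExtensionsSplit.exists_extend {T : ShortComplex ℬ} (hT : T.ShortExact) {A : ℬ}
    (hA : ExtensionsSplit T.X₃ A) (u : T.X₁ ⟶ A) : ∃ r : T.X₂ ⟶ A, T.f ≫ r = u := by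
  have hE := shortExact_pushout hT u
  obtain ⟨s, hs⟩ := hA _ _ _ _ hE
  let σ := ShortComplex.Splitting.ofExactOfSection _ hE.exact s hs hE.mono_f
  have hr : pushout.inl u T.f ≫ σ.r = 𝟙 A := σ.f_r
  exact ⟨pushout.inr u T.f ≫ σ.r, by rw [← pushout.condition_assoc, hr, Category.comp_id]⟩

theorem ExtensionsSplit.exists_lift {T : ShortComplex ℬ} (hT : T.ShortExact) {X : ℬ}
    (hX : ExtensionsSplit X T.X₁) (v : X ⟶ T.X₃) : ∃ l : X ⟶ T.X₂, l ≫ T.g = v := by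
  obtain ⟨s, hs⟩ := hX _ _ _ _ (shortExact_pullback hT v)
  exact ⟨s ≫ pullback.fst T.g v, by
    rw [Category.assoc, pullback.condition, reassoc_of% hs]⟩

variable {S P : ObjectProperty ℬ}

theorem leftOrthogonal_of_epi {X Y : ℬ} (p : X ⟶ Y) [Epi p] (hX : S.leftOrthogonal X) :
    S.leftOrthogonal Y := fun A f hA ↦ by
  rw [← cancel_epi p, comp_zero, hX (p ≫ f) hA]

theorem leftOrthogonal_X₁_of_shortExact {T : ShortComplex ℬ} (hT : T.ShortExact)
    (h₂ : S.leftOrthogonal T.X₂) (h₃ : ∀ ⦃A : ℬ⦄, S A → ExtensionsSplit T.X₃ A) :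
    S.leftOrthogonal T.X₁ := fun A u hA ↦ by
  obtain ⟨r, rfl⟩ := (h₃ hA).exists_extend hT u
  rw [h₂ r hA, comp_zero]

theorem leftPerpendicular_X₃_of_shortExact {T : ShortComplex ℬ} (hT : T.ShortExact)
    (h₁ : S.leftOrthogonal T.X₁) (h₂ : leftPerpendicular S T.X₂) :
    leftPerpendicular S T.X₃ := by
  have : Epi T.g := hT.epi_g
  refine ⟨leftOrthogonal_of_epi T.g h₂.1, fun A hA E i q w hE ↦ ?_⟩
  have : Mono i := hE.mono_f
  obtain ⟨l, hl : l ≫ q = T.g⟩ := (h₂.2 hA).exists_lift hE T.g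
  have hzero : (T.f ≫ l) ≫ q = 0 := by rw [Category.assoc, hl, T.zero]
  have hfl : T.f ≫ l = 0 := by
    rw [← hE.exact.lift_f _ hzero, h₁ (hE.exact.lift _ hzero) hA, zero_comp]
  refine ⟨hT.exact.desc l hfl, ?_⟩
  rw [← cancel_epi T.g, hT.exact.g_desc_assoc, hl, Category.comp_id]

theorem shortExact_kernel {X Y : ℬ} (g : X ⟶ Y) [Epi g] :
    (ShortComplex.mk (kernel.ι g) g (kernel.condition g)).ShortExact :=
  .mk' (ShortComplex.exact_kernel g) inferInstance inferInstance

theorem stmt13_general (hP : P ≤ leftPerpendicular S)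
    (hcover : ∀ ⦃X : ℬ⦄, S.leftOrthogonal X → ∃ (Q : ℬ) (_ : P Q) (p : Q ⟶ X), Epi p) (B : ℬ) :
    HasPresentation P B ↔ leftPerpendicular S B := by
  constructor
  · rintro ⟨P₁, P₀, hP₁, hP₀, f, g, w, hg, hexact⟩
    have : Epi (kernel.lift g f w) := (ShortComplex.exact_iff_epi_kernel_lift _).1 hexact
    exact leftPerpendicular_X₃_of_shortExact (shortExact_kernel g)
      (leftOrthogonal_of_epi (kernel.lift g f w) (hP _ hP₁).1) (hP _ hP₀)
  · rintro ⟨hhom, hext⟩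
    obtain ⟨P₀, hP₀, g, hg⟩ := hcover hhom
    obtain ⟨P₁, hP₁, p, hp⟩ :=
      hcover (leftOrthogonal_X₁_of_shortExact (shortExact_kernel g) (hP _ hP₀).1 hext)
    refine ⟨P₁, P₀, hP₁, hP₀, p ≫ kernel.ι g, g, by simp, hg, ?_⟩
    rw [ShortComplex.exact_iff_epi_kernel_lift]
    have hlift : kernel.lift g (p ≫ kernel.ι g) (by simp) = p := by
      rw [← cancel_mono (kernel.ι g), kernel.lift_ι]
    simpa only [hlift] using hp

end Extensions

namespace AbelianRecollement

variable {𝒜 ℬ 𝒞 : Type*} [Category 𝒜] [Category ℬ] [Category 𝒞]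
  [Abelian 𝒜] [Abelian ℬ] [Abelian 𝒞] (R : AbelianRecollement 𝒜 ℬ 𝒞)

/-- The objects `i_* A` of `ℬ`, not closed up under isomorphism. -/
abbrev iLowObjects : ObjectProperty ℬ := .ofObj R.iLow.obj

/-- The objects `j_! P` of `ℬ` with `P` projective in `𝒞`, not closed up under isomorphism. -/
abbrev jShriekProjectives : ObjectProperty ℬ := (isProjective 𝒞).strictMap R.jShriek

theorem leftOrthogonal_jShriek_obj (C : 𝒞) : R.iLowObjects.leftOrthogonal (R.jShriek.obj C) := by
  rintro _ f ⟨A⟩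
  exact (R.adj₃.homEquiv _ _).injective ((R.jStar_iLow_zero A).eq_of_tgt _ _)

theorem projective_jShriek_obj (P : 𝒞) [hP : Projective P] : Projective (R.jShriek.obj P) :=
  have := R.jStar_preservesFiniteColimits
  R.adj₃.map_projective P hP

theorem jShriekProjectives_le_leftPerpendicular :
    R.jShriekProjectives ≤ leftPerpendicular R.iLowObjects := by
  rintro _ ⟨P, hP⟩
  have : Projective P := hP
  have := R.projective_jShriek_obj P
  exact ⟨R.leftOrthogonal_jShriek_obj P, fun A _ ↦ extensionsSplit_of_projective _ A⟩

theorem epi_counit_of_leftOrthogonal {X : ℬ} (hX : R.iLowObjects.leftOrthogonal X) :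
    Epi (R.adj₃.counit.app X) := by
  obtain ⟨hcokernel⟩ := R.exact₂ X
  have hexact := ShortComplex.exact_of_g_is_cokernel (.mk _ _ (R.comp_zero₂ X)) hcokernel
  exact hexact.epi_f (hX (R.adj₁.unit.app X) ⟨_⟩)

theorem exists_epi_of_leftOrthogonal [EnoughProjectives 𝒞] {X : ℬ}
    (hX : R.iLowObjects.leftOrthogonal X) :
    ∃ (P : ℬ) (_ : R.jShriekProjectives P) (p : P ⟶ X), Epi p := by
  have := R.epi_counit_of_leftOrthogonal hX
  have := R.adj₃.isLeftAdjoint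
  exact ⟨_, ⟨_, Projective.projective_over (R.jStar.obj X)⟩,
    R.jShriek.map (Projective.π (R.jStar.obj X)) ≫ R.adj₃.counit.app X, inferInstance⟩

theorem hasPresentation_jShriekProjectives_iff (B : ℬ) :
    HasPresentation R.jShriekProjectives B ↔
      ∃ (P₁ P₀ : 𝒞) (_ : Projective P₁) (_ : Projective P₀)
        (f : R.jShriek.obj P₁ ⟶ R.jShriek.obj P₀) (g : R.jShriek.obj P₀ ⟶ B)
        (w : f ≫ g = 0), Epi g ∧ (ShortComplex.mk f g w).Exact := by
  constructor
  · rintro ⟨_, _, ⟨P₁, hP₁⟩, ⟨P₀, hP₀⟩, h⟩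
    exact ⟨P₁, P₀, hP₁, hP₀, h⟩
  · rintro ⟨P₁, P₀, hP₁, hP₀, h⟩
    exact ⟨_, _, ⟨P₁, hP₁⟩, ⟨P₀, hP₀⟩, h⟩

theorem leftPerpendicular_iLowObjects_iff (B : ℬ) :
    leftPerpendicular R.iLowObjects B ↔
      (∀ (A : 𝒜) (f : B ⟶ R.iLow.obj A), f = 0) ∧
        ∀ A : 𝒜, ExtensionsSplit B (R.iLow.obj A) := by
  refine and_congr ⟨fun h A f ↦ h f ⟨A⟩, ?_⟩ ⟨fun h A ↦ h ⟨A⟩, ?_⟩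
  · rintro h _ f ⟨A⟩
    exact h A f
  · rintro h _ ⟨A⟩
    exact h A

end AbelianRecollement

/-- Let `(𝒜, ℬ, 𝒞)` be a recollement of abelian categories where `𝒞` has enough projectives.
For `B : ℬ` the following are equivalent: (a) there is an exact sequence
`j_! P₁ ⟶ j_! P₀ ⟶ B ⟶ 0` with `P₁`, `P₀` projective in `𝒞`; (b) `Hom_ℬ(B, i_* A) = 0` for
all `A : 𝒜` and every short exact sequence `0 ⟶ i_* A ⟶ E ⟶ B ⟶ 0` splits. -/
theorem stmt13 {𝒜 ℬ 𝒞 : Type*} [Category 𝒜] [Category ℬ] [Category 𝒞]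
    [Abelian 𝒜] [Abelian ℬ] [Abelian 𝒞]
    (R : AbelianRecollement 𝒜 ℬ 𝒞) [EnoughProjectives 𝒞] (B : ℬ) :
    (∃ (P₁ P₀ : 𝒞) (_ : Projective P₁) (_ : Projective P₀)
        (f : R.jShriek.obj P₁ ⟶ R.jShriek.obj P₀) (g : R.jShriek.obj P₀ ⟶ B)
        (w : f ≫ g = 0), Epi g ∧ (ShortComplex.mk f g w).Exact) ↔
    ((∀ (A : 𝒜) (f : B ⟶ R.iLow.obj A), f = 0) ∧
      (∀ (A : 𝒜) (E : ℬ) (f : R.iLow.obj A ⟶ E) (g : E ⟶ B) (w : f ≫ g = 0),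
        (ShortComplex.mk f g w).ShortExact → ∃ s : B ⟶ E, s ≫ g = 𝟙 B)) := by
  rw [← R.hasPresentation_jShriekProjectives_iff B,
    stmt13_general R.jShriekProjectives_le_leftPerpendicular
      (fun _ ↦ R.exists_epi_of_leftOrthogonal) B]
  exact R.leftPerpendicular_iLowObjects_iff B
end

section
/- Let (𝒜, ℬ, 𝒞) be a recollement of abelian categories and suppose 𝒞 has enough injective objects. For an object B of ℬ the following are equivalent: (a) there exist injective objects I₀, I₁ of 𝒞 and an exact sequence 0 → B → j_*(I₀) → j_*(I₁) in ℬ; (b) Hom_ℬ(i_*(A), B) = 0 for every object A of 𝒜, and every short exact sequence 0 → B → E → i_*(A) → 0 in ℬ (with A an object of 𝒜) splits. -/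
open CategoryTheory CategoryTheory.Limits

/-!
The functor `j^*` is exact with fully faithful right adjoint `j_*`, and its kernel is the essential
image of `i_*`. Both conditions on `B` say that `B` lies in the essential
image of `j_*`.

For (a), this essential image is closed under kernels, and conversely `j_*` carries an injective
copresentation of `j^* B` to one of `j_* j^* B ≅ B`. For (b), an object of the essential image is
local for the morphisms inverted by `j^*`, such as `K ⟶ 0` and the monomorphism of an extension by
`K` when `j^* K = 0`. Conversely, (b) splits the unit `B ⟶ j_* j^* B`, whose kernel and cokernel
are killed by `j^*`, and a split unit of a reflection is invertible.
-/

section RightPerpendicular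

open scoped ZeroObject

variable {ℬ : Type*} [Category ℬ] [Abelian ℬ]

/-- The right perpendicular category of `P`, in the sense of Geigle and Lenzing: the objects `B`
with `Hom(K, B) = 0` and `Ext¹(K, B) = 0` for all `K` in `P`. The second condition is expressed as
the splitting of all extensions of `K` by `B`. -/
def rightPerpendicular (P : ObjectProperty ℬ) : ObjectProperty ℬ := fun B =>
  P.rightOrthogonal B ∧
    ∀ ⦃K E : ℬ⦄ (f : B ⟶ E) (g : E ⟶ K) (w : f ≫ g = 0),
      P K → (ShortComplex.mk f g w).ShortExact → IsSplitMono f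

lemma isSplitMono_of_rightPerpendicular {P : ObjectProperty ℬ} {B E : ℬ}
    (hB : rightPerpendicular P B) (f : B ⟶ E) (hker : P (kernel f)) (hcoker : P (cokernel f)) :
    IsSplitMono f := by
  have : Mono f := Preadditive.mono_of_kernel_zero (hB.1 _ hker)
  exact hB.2 f (cokernel.π f) (cokernel.condition f) hcoker
    { exact := ShortComplex.exact_cokernel f }

lemma isLocal_isoModSerre_le_rightPerpendicular (P : ObjectProperty ℬ) [P.IsSerreClass] :
    P.isoModSerre.isLocal ≤ rightPerpendicular P := by
  refine fun B hB => ⟨fun K φ hK => ?_, fun K E f g w hK hS => ?_⟩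
  · have h0 : P.isoModSerre (0 : K ⟶ (0 : ℬ)) := (P.isoModSerre_zero_iff _ _).2 ⟨hK, P.prop_zero⟩
    obtain ⟨ψ, hψ⟩ := (hB _ h0).2 φ
    exact hψ.symm.trans zero_comp
  · have : Mono f := hS.mono_f
    have hcoker : P (cokernel f) :=
      P.prop_of_iso ((cokernelIsCokernel f).coconePointUniqueUpToIso hS.gIsCokernel).symm hK
    obtain ⟨r, hr⟩ := (hB f (P.isoModSerre_of_mono f hcoker)).2 (𝟙 B)
    exact ⟨⟨⟨r, hr⟩⟩⟩

lemma rightPerpendicular_essImage_iff {𝒜 : Type*} [Category 𝒜] (i : 𝒜 ⥤ ℬ) (B : ℬ) :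
    rightPerpendicular i.essImage B ↔
      (∀ (A : 𝒜) (f : i.obj A ⟶ B), f = 0) ∧
        ∀ (A : 𝒜) (E : ℬ) (f : B ⟶ E) (g : E ⟶ i.obj A) (w : f ≫ g = 0),
          (ShortComplex.mk f g w).ShortExact → ∃ r : E ⟶ B, f ≫ r = 𝟙 B := by
  refine ⟨fun hB => ⟨fun A f => hB.1 f (i.obj_mem_essImage A), fun A E f g w hS => ?_⟩,
    fun ⟨hHom, hExt⟩ => ⟨?_, ?_⟩⟩
  · obtain ⟨⟨s⟩⟩ := hB.2 f g w (i.obj_mem_essImage A) hS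
    exact ⟨s.retraction, s.id⟩
  · rintro K f ⟨A, ⟨e⟩⟩
    rw [← cancel_epi e.hom, hHom A (e.hom ≫ f), comp_zero]
  · rintro K E f g w ⟨A, ⟨e⟩⟩ hS
    have w' : f ≫ g ≫ e.inv = 0 := by rw [reassoc_of% w, zero_comp]
    let φ : ShortComplex.mk f g w ≅ ShortComplex.mk f (g ≫ e.inv) w' :=
      ShortComplex.isoMk (Iso.refl B) (Iso.refl E) e.symm
    have hS' := ShortComplex.shortExact_of_iso φ hS
    obtain ⟨r, hr⟩ := hExt A E f (g ≫ e.inv) w' hS'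
    exact ⟨⟨⟨r, hr⟩⟩⟩

end RightPerpendicular

section EssImage

variable {ℬ 𝒞 : Type*} [Category ℬ] [Category 𝒞] [Abelian ℬ] [Abelian 𝒞]

lemma essImage_of_exact (G : 𝒞 ⥤ ℬ) [G.Full] [G.Faithful] [PreservesFiniteLimits G]
    {S : ShortComplex ℬ} (hS : S.Exact) [Mono S.f] (h₂ : G.essImage S.X₂)
    (h₃ : G.essImage S.X₃) : G.essImage S.X₁ :=
  G.essImage.prop_of_isLimit hS.fIsKernel (by rintro (_ | _) <;> assumption)

lemma exists_injective_copresentation [EnoughInjectives 𝒞] (C : 𝒞) :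
    ∃ (I₀ I₁ : 𝒞) (_ : Injective I₀) (_ : Injective I₁) (g : C ⟶ I₀) (f : I₀ ⟶ I₁)
      (w : g ≫ f = 0), Mono g ∧ (ShortComplex.mk g f w).Exact :=
  ⟨_, _, inferInstance, inferInstance, Injective.ι C, Injective.d (Injective.ι C), _,
    inferInstance, exact_f_d (Injective.ι C)⟩

lemma exists_injective_copresentation_iff_essImage [EnoughInjectives 𝒞] (G : 𝒞 ⥤ ℬ) [G.Full]
    [G.Faithful] [PreservesFiniteLimits G] (B : ℬ) :
    (∃ (I₀ I₁ : 𝒞) (_ : Injective I₀) (_ : Injective I₁)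
        (g : B ⟶ G.obj I₀) (f : G.obj I₀ ⟶ G.obj I₁)
        (w : g ≫ f = 0), Mono g ∧ (ShortComplex.mk g f w).Exact) ↔ G.essImage B := by
  constructor
  · rintro ⟨I₀, I₁, -, -, g, f, w, _, hex⟩
    exact essImage_of_exact G hex (G.obj_mem_essImage I₀) (G.obj_mem_essImage I₁)
  · rintro ⟨C, ⟨e⟩⟩
    obtain ⟨I₀, I₁, hI₀, hI₁, g, f, w, _, hex⟩ := exists_injective_copresentation C
    have w' : (e.inv ≫ G.map g) ≫ G.map f = 0 := by
      rw [Category.assoc, ← G.map_comp, w, G.map_zero, comp_zero]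
    let φ : (ShortComplex.mk g f w).map G ≅ ShortComplex.mk (e.inv ≫ G.map g) (G.map f) w' :=
      ShortComplex.isoMk e (Iso.refl (G.obj I₀)) (Iso.refl (G.obj I₁))
        ((e.hom_inv_id_assoc _).trans (Category.comp_id _).symm)
        ((Category.id_comp _).trans (Category.comp_id _).symm)
    exact ⟨I₀, I₁, hI₀, hI₁, e.inv ≫ G.map g, G.map f, w', inferInstance,
      ShortComplex.exact_of_iso φ
        (hex.map_of_mono_of_preservesKernel G inferInstance inferInstance)⟩

variable {L : ℬ ⥤ 𝒞} {G : 𝒞 ⥤ ℬ} [PreservesFiniteLimits L] [PreservesFiniteColimits L]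
  [G.Full] [G.Faithful]

lemma isoModSerre_kernel_unit_app (adj : L ⊣ G) (B : ℬ) :
    L.kernel.isoModSerre (adj.unit.app B) := by
  rw [Abelian.isoModSerre_kernel_eq_isLocal_of_rightAdjoint adj]
  exact ObjectProperty.isLocal_adj_unit_app adj B

lemma essImage_le_isLocal_isoModSerre_kernel (adj : L ⊣ G) :
    G.essImage ≤ L.kernel.isoModSerre.isLocal := by
  rintro B ⟨C, ⟨e⟩⟩
  refine ObjectProperty.prop_of_iso _ e fun X Y f hf => ?_
  rw [Abelian.isoModSerre_kernel_eq_isLocal_of_rightAdjoint adj] at hf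
  exact hf _ ⟨C, rfl⟩

lemma essImage_eq_rightPerpendicular_kernel (adj : L ⊣ G) :
    G.essImage = rightPerpendicular L.kernel := by
  apply le_antisymm
  · exact (essImage_le_isLocal_isoModSerre_kernel adj).trans
      (isLocal_isoModSerre_le_rightPerpendicular _)
  · intro B hB
    let _ : Reflective G := ⟨L, adj⟩
    obtain ⟨hker, hcoker⟩ := isoModSerre_kernel_unit_app adj B
    have : IsSplitMono ((reflectorAdjunction G).unit.app B) :=
      isSplitMono_of_rightPerpendicular hB _ hker hcoker
    exact mem_essImage_of_unit_isSplitMono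

end EssImage

namespace AbelianRecollement

attribute [instance] jLow_full jLow_faithful jStar_preservesFiniteLimits

lemma essImage_iLow_eq_kernel_jStar {𝒜 ℬ 𝒞 : Type*} [Category 𝒜] [Category ℬ] [Category 𝒞]
    [Abelian 𝒜] [Abelian ℬ] [Abelian 𝒞] (R : AbelianRecollement 𝒜 ℬ 𝒞) :
    R.iLow.essImage = R.jStar.kernel := by
  apply le_antisymm
  · rintro X ⟨A, ⟨e⟩⟩
    exact (R.jStar_iLow_zero A).of_iso (R.jStar.mapIso e.symm)
  · intro X hX
    obtain ⟨hl⟩ := R.exact₁ X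
    have unit_eq_zero : R.adj₄.unit.app X = 0 := (R.jLow.map_isZero hX).eq_of_tgt _ _
    have : IsIso (R.adj₂.counit.app X) := KernelFork.IsLimit.isIso_ι _ hl unit_eq_zero
    exact ⟨R.iShriek.obj X, ⟨asIso (R.adj₂.counit.app X)⟩⟩

end AbelianRecollement

theorem stmt15_general {𝒜 ℬ 𝒞 : Type*} [Category 𝒜] [Category ℬ] [Category 𝒞]
    [Abelian ℬ] [Abelian 𝒞] [EnoughInjectives 𝒞] {i : 𝒜 ⥤ ℬ} {L : ℬ ⥤ 𝒞} {G : 𝒞 ⥤ ℬ}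
    (adj : L ⊣ G) [PreservesFiniteLimits L] [G.Full] [G.Faithful]
    (hi : i.essImage = L.kernel) (B : ℬ) :
    (∃ (I₀ I₁ : 𝒞) (_ : Injective I₀) (_ : Injective I₁)
        (g : B ⟶ G.obj I₀) (f : G.obj I₀ ⟶ G.obj I₁)
        (w : g ≫ f = 0), Mono g ∧ (ShortComplex.mk g f w).Exact) ↔
    ((∀ (A : 𝒜) (f : i.obj A ⟶ B), f = 0) ∧
      (∀ (A : 𝒜) (E : ℬ) (f : B ⟶ E) (g : E ⟶ i.obj A) (w : f ≫ g = 0),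
        (ShortComplex.mk f g w).ShortExact → ∃ r : E ⟶ B, f ≫ r = 𝟙 B)) := by
  have := adj.leftAdjoint_preservesColimits
  have := adj.rightAdjoint_preservesLimits
  rw [exists_injective_copresentation_iff_essImage, essImage_eq_rightPerpendicular_kernel adj,
    ← hi, rightPerpendicular_essImage_iff]

/-- Let `(𝒜, ℬ, 𝒞)` be a recollement of abelian categories where `𝒞` has enough injectives.
For `B : ℬ` the following are equivalent: (a) there is an exact sequence
`0 ⟶ B ⟶ j_* I₀ ⟶ j_* I₁` with `I₀`, `I₁` injective in `𝒞`; (b) `Hom_ℬ(i_* A, B) = 0` for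
all `A : 𝒜` and every short exact sequence `0 ⟶ B ⟶ E ⟶ i_* A ⟶ 0` splits. -/
theorem stmt15 {𝒜 ℬ 𝒞 : Type*} [Category 𝒜] [Category ℬ] [Category 𝒞]
    [Abelian 𝒜] [Abelian ℬ] [Abelian 𝒞]
    (R : AbelianRecollement 𝒜 ℬ 𝒞) [EnoughInjectives 𝒞] (B : ℬ) :
    (∃ (I₀ I₁ : 𝒞) (_ : Injective I₀) (_ : Injective I₁)
        (g : B ⟶ R.jLow.obj I₀) (f : R.jLow.obj I₀ ⟶ R.jLow.obj I₁)
        (w : g ≫ f = 0), Mono g ∧ (ShortComplex.mk g f w).Exact) ↔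
    ((∀ (A : 𝒜) (f : R.iLow.obj A ⟶ B), f = 0) ∧
      (∀ (A : 𝒜) (E : ℬ) (f : B ⟶ E) (g : E ⟶ R.iLow.obj A) (w : f ≫ g = 0),
        (ShortComplex.mk f g w).ShortExact → ∃ r : E ⟶ B, f ≫ r = 𝟙 B)) :=
  stmt15_general R.adj₄ R.essImage_iLow_eq_kernel_jStar B
end

section
/- Let (𝒜, ℬ, 𝒞) be a recollement of abelian categories. If an object B of ℬ satisfies Hom_ℬ(B, i_*(A)) = 0 for every object A of 𝒜 and every short exact sequence 0 → i_*(A) → E → B → 0 in ℬ splits, then the counit ε_B : j_! j^*(B) → B of the adjunction (j_!, j^*) is an isomorphism. -/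
open CategoryTheory CategoryTheory.Limits

/-!
The kernel of `j^*` is the essential image of `i_*`, and `j^*` inverts the counit
`ε : j_! j^* B ⟶ B`, so `j^*` kills both the kernel and the cokernel of `ε`. Hence the vanishing of
`Hom(B, i_* -)` makes `ε` an epimorphism, and the splitting hypothesis then gives it a section.
Finally, `j^*` is faithful on morphisms out of `j_! C`, so a split epimorphism out of `j_! C` is an
isomorphism as soon as `j^*` inverts it.
-/

section ZeroMorphisms

variable {ℬ 𝒞 : Type*} [Category ℬ] [Category 𝒞] [HasZeroMorphisms ℬ] [HasZeroMorphisms 𝒞]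
  (G : ℬ ⥤ 𝒞) [G.PreservesZeroMorphisms] {X Y : ℬ} (f : X ⟶ Y)

theorem isZero_obj_kernel_of_mono_map_s17 [G.PreservesMonomorphisms] [HasKernel f] [Mono (G.map f)] :
    IsZero (G.obj (kernel f)) := by
  refine IsZero.of_mono_eq_zero (G.map (kernel.ι f)) (zero_of_comp_mono (G.map f) ?_)
  rw [← G.map_comp, kernel.condition, G.map_zero]

theorem isZero_obj_cokernel_of_epi_map_s17 [G.PreservesEpimorphisms] [HasCokernel f]
    [Epi (G.map f)] : IsZero (G.obj (cokernel f)) := by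
  refine IsZero.of_epi_eq_zero (G.map (cokernel.π f)) (zero_of_epi_comp (G.map f) ?_)
  rw [← G.map_comp, cokernel.condition, G.map_zero]

end ZeroMorphisms

section Adjunction

variable {ℬ 𝒞 : Type*} [Category ℬ] [Category 𝒞] {L : 𝒞 ⥤ ℬ} {G : ℬ ⥤ 𝒞}

theorem eq_of_map_eq_of_adjunction (adj : L ⊣ G) {C : 𝒞} {X : ℬ} {f g : L.obj C ⟶ X}
    (h : G.map f = G.map g) : f = g :=
  (adj.homEquiv C X).injective (by rw [adj.homEquiv_unit, adj.homEquiv_unit, h])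

theorem isIso_of_isSplitEpi_of_mono_map (adj : L ⊣ G) {C : 𝒞} {X : ℬ} (f : L.obj C ⟶ X)
    [IsSplitEpi f] [Mono (G.map f)] : IsIso f := by
  have section_comp : section_ f ≫ f = 𝟙 X := IsSplitEpi.id f
  refine ⟨section_ f, eq_of_map_eq_of_adjunction adj ?_, section_comp⟩
  rw [← cancel_mono (G.map f), ← G.map_comp, ← G.map_comp, Category.assoc, section_comp,
    Category.comp_id, Category.id_comp]

end Adjunction

theorem shortExact_of_iso_kernel {ℬ : Type*} [Category ℬ] [Abelian ℬ] {K X Y : ℬ} (g : X ⟶ Y)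
    [Epi g] (e : K ≅ kernel g) :
    (ShortComplex.mk (e.hom ≫ kernel.ι g) g (by simp)).ShortExact := by
  have kernel_shortExact : (ShortComplex.mk (kernel.ι g) g (kernel.condition g)).ShortExact :=
    { exact := ShortComplex.exact_kernel g }
  exact ShortComplex.shortExact_of_iso
    (ShortComplex.isoMk e.symm (Iso.refl X) (Iso.refl Y)) kernel_shortExact

section EssImage

variable {𝒜 ℬ 𝒞 : Type*} [Category 𝒜] [Category ℬ] [Category 𝒞] [Abelian ℬ] [HasZeroMorphisms 𝒞]
  {G : ℬ ⥤ 𝒞} [G.PreservesZeroMorphisms] {i : 𝒜 ⥤ ℬ} {X Y : ℬ}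

theorem epi_of_epi_map_of_forall_eq_zero [G.PreservesEpimorphisms]
    (hi : G.kernel ≤ i.essImage) (f : X ⟶ Y) [Epi (G.map f)]
    (h : ∀ (A : 𝒜) (g : Y ⟶ i.obj A), g = 0) : Epi f := by
  obtain ⟨A, ⟨e⟩⟩ := hi _ (isZero_obj_cokernel_of_epi_map_s17 G f)
  exact Abelian.epi_of_cokernel_π_eq_zero f (zero_of_comp_mono e.inv (h A _))

theorem isSplitEpi_of_mono_map_of_forall_split [G.PreservesMonomorphisms]
    (hi : G.kernel ≤ i.essImage) (f : X ⟶ Y) [Mono (G.map f)] [Epi f]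
    (h : ∀ (A : 𝒜) (E : ℬ) (k : i.obj A ⟶ E) (g : E ⟶ Y) (w : k ≫ g = 0),
      (ShortComplex.mk k g w).ShortExact → ∃ s : Y ⟶ E, s ≫ g = 𝟙 Y) : IsSplitEpi f := by
  obtain ⟨A, ⟨e⟩⟩ := hi _ (isZero_obj_kernel_of_mono_map_s17 G f)
  obtain ⟨s, hs⟩ := h A X _ f _ (shortExact_of_iso_kernel f e)
  exact IsSplitEpi.mk' ⟨s, hs⟩

end EssImage

theorem stmt17_general {𝒜 ℬ 𝒞 : Type*} [Category 𝒜] [Category ℬ] [Category 𝒞]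
    [Abelian ℬ] [HasZeroMorphisms 𝒞] {L : 𝒞 ⥤ ℬ} {G : ℬ ⥤ 𝒞} [L.Full] [L.Faithful]
    [G.PreservesEpimorphisms] (adj : L ⊣ G) {i : 𝒜 ⥤ ℬ} (hi : G.kernel ≤ i.essImage) (B : ℬ)
    (h₁ : ∀ (A : 𝒜) (f : B ⟶ i.obj A), f = 0)
    (h₂ : ∀ (A : 𝒜) (E : ℬ) (f : i.obj A ⟶ E) (g : E ⟶ B) (w : f ≫ g = 0),
      (ShortComplex.mk f g w).ShortExact → ∃ s : B ⟶ E, s ≫ g = 𝟙 B) :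
    IsIso (adj.counit.app B) := by
  have := adj.isRightAdjoint
  have : Epi (adj.counit.app B) := epi_of_epi_map_of_forall_eq_zero hi _ h₁
  have : IsSplitEpi (adj.counit.app B) := isSplitEpi_of_mono_map_of_forall_split hi _ h₂
  exact isIso_of_isSplitEpi_of_mono_map adj _

namespace AbelianRecollement

variable {𝒜 ℬ 𝒞 : Type*} [Category 𝒜] [Category ℬ] [Category 𝒞]
  [Abelian 𝒜] [Abelian ℬ] [Abelian 𝒞] (R : AbelianRecollement 𝒜 ℬ 𝒞)

instance : R.jShriek.Full := R.jShriek_full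

instance : R.jShriek.Faithful := R.jShriek_faithful

instance : R.jStar.IsLeftAdjoint := R.adj₄.isLeftAdjoint

instance : R.jLow.IsRightAdjoint := R.adj₄.isRightAdjoint

theorem kernel_jStar_le_essImage_iLow : R.jStar.kernel ≤ R.iLow.essImage := by
  intro X hX
  have unit_eq_zero : R.adj₄.unit.app X = 0 := (R.jLow.map_isZero hX).eq_of_tgt _ _
  obtain ⟨isLimit⟩ := R.exact₁ X
  have : IsIso (R.adj₂.counit.app X) := KernelFork.IsLimit.isIso_ι _ isLimit unit_eq_zero
  exact ⟨R.iShriek.obj X, ⟨asIso (R.adj₂.counit.app X)⟩⟩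

end AbelianRecollement

/-- Let `(𝒜, ℬ, 𝒞)` be a recollement of abelian categories.  If `B : ℬ` satisfies
`Hom_ℬ(B, i_* A) = 0` for every `A : 𝒜` and every short exact sequence
`0 ⟶ i_* A ⟶ E ⟶ B ⟶ 0` splits, then the counit `ε_B : j_! j^* B ⟶ B` of the adjunction
`(j_!, j^*)` is an isomorphism. -/
theorem stmt17 {𝒜 ℬ 𝒞 : Type*} [Category 𝒜] [Category ℬ] [Category 𝒞]
    [Abelian 𝒜] [Abelian ℬ] [Abelian 𝒞]
    (R : AbelianRecollement 𝒜 ℬ 𝒞) (B : ℬ)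
    (h₁ : ∀ (A : 𝒜) (f : B ⟶ R.iLow.obj A), f = 0)
    (h₂ : ∀ (A : 𝒜) (E : ℬ) (f : R.iLow.obj A ⟶ E) (g : E ⟶ B) (w : f ≫ g = 0),
      (ShortComplex.mk f g w).ShortExact → ∃ s : B ⟶ E, s ≫ g = 𝟙 B) :
    IsIso (R.adj₃.counit.app B) :=
  stmt17_general R.adj₃ R.kernel_jStar_le_essImage_iLow B h₁ h₂
end

section
/- Let 𝒜 and ℬ be categories, W₁ a class of morphisms of 𝒜 and W₂ a class of morphisms of ℬ, and let L₁ : 𝒜 ⥤ 𝒜̃ and L₂ : ℬ ⥤ ℬ̃ be localization functors with respect to W₁ and W₂ respectively. Let F : 𝒜 ⥤ ℬ and G : ℬ ⥤ 𝒜 be functors with an adjunction F ⊣ G such that F sends every morphism of W₁ to a morphism of W₂ and G sends every morphism of W₂ to a morphism of W₁; let F̃ : 𝒜̃ ⥤ ℬ̃ and G̃ : ℬ̃ ⥤ 𝒜̃ be the induced functors, characterized up to natural isomorphism by F̃ ∘ L₁ ≅ L₂ ∘ F and G̃ ∘ L₂ ≅ L₁ ∘ G. If G is fully faithful, then G̃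 is fully faithful; and if F is fully faithful, then F̃ is fully faithful. -/
open CategoryTheory

/-!
Since `F'` and `G'` are compatible with the localization functors, `adj : F ⊣ G` descends to an
adjunction `F' ⊣ G'` whose unit at `L₁.obj X` is `L₁.map (adj.unit.app X)` up to isomorphisms, and
dually for the counit. A left adjoint is fully faithful exactly when the unit is invertible, and
localization functors are essentially surjective, so `F'` is fully faithful exactly when `L₁`
inverts the unit of `adj`; this is automatic if that unit is already invertible.
-/

section EssSurj

variable {𝒞 𝒟 ℰ : Type*} [Category 𝒞] [Category 𝒟] [Category ℰ]

theorem natTrans_isIso_iff_isIso_app_obj_of_essSurj (L : 𝒞 ⥤ 𝒟) [L.EssSurj] {H K : 𝒟 ⥤ ℰ}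
    (α : H ⟶ K) : IsIso α ↔ ∀ X, IsIso (α.app (L.obj X)) := by
  rw [NatTrans.isIso_iff_isIso_app]
  refine ⟨fun h X => h (L.obj X), fun h Y => ?_⟩
  rw [NatTrans.isIso_app_iff_of_iso α (L.objObjPreimageIso Y).symm]
  exact h (L.objPreimage Y)

end EssSurj

section FullyFaithful

variable {𝒞 𝒟 : Type*} [Category 𝒞] [Category 𝒟] {F : 𝒞 ⥤ 𝒟} {G : 𝒟 ⥤ 𝒞}

theorem leftAdjoint_full_and_faithful_iff_isIso_unit (adj : F ⊣ G) :
    (F.Full ∧ F.Faithful) ↔ IsIso adj.unit :=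
  ⟨fun ⟨_, _⟩ => inferInstance,
    fun _ => ⟨adj.fullyFaithfulLOfIsIsoUnit.full, adj.fullyFaithfulLOfIsIsoUnit.faithful⟩⟩

theorem rightAdjoint_full_and_faithful_iff_isIso_counit (adj : F ⊣ G) :
    (G.Full ∧ G.Faithful) ↔ IsIso adj.counit :=
  ⟨fun ⟨_, _⟩ => inferInstance,
    fun _ => ⟨adj.fullyFaithfulROfIsIsoCounit.full, adj.fullyFaithfulROfIsIsoCounit.faithful⟩⟩

end FullyFaithful

section Localization

variable {𝒜 ℬ 𝒜' ℬ' : Type*} [Category 𝒜] [Category ℬ] [Category 𝒜'] [Category ℬ']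
  (W₁ : MorphismProperty 𝒜) (W₂ : MorphismProperty ℬ) (L₁ : 𝒜 ⥤ 𝒜') (L₂ : ℬ ⥤ ℬ')
  [L₁.IsLocalization W₁] [L₂.IsLocalization W₂] {F : 𝒜 ⥤ ℬ} {G : ℬ ⥤ 𝒜} (adj : F ⊣ G)
  (F' : 𝒜' ⥤ ℬ') (G' : ℬ' ⥤ 𝒜') [CatCommSq F L₁ L₂ F'] [CatCommSq G L₂ L₁ G']

theorem isIso_localization_unit_iff :
    IsIso (adj.localization L₁ W₁ L₂ W₂ F' G').unit ↔ ∀ X, IsIso (L₁.map (adj.unit.app X)) := by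
  have := Localization.essSurj L₁ W₁
  rw [natTrans_isIso_iff_isIso_app_obj_of_essSurj L₁]
  refine forall_congr' fun X => ?_
  rw [adj.localization_unit_app, isIso_comp_right_iff]

theorem isIso_localization_counit_iff :
    IsIso (adj.localization L₁ W₁ L₂ W₂ F' G').counit ↔
      ∀ Y, IsIso (L₂.map (adj.counit.app Y)) := by
  have := Localization.essSurj L₂ W₂
  rw [natTrans_isIso_iff_isIso_app_obj_of_essSurj L₂]
  refine forall_congr' fun Y => ?_
  rw [adj.localization_counit_app, isIso_comp_left_iff, isIso_comp_left_iff]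

end Localization

theorem stmt19_general {𝒜 ℬ 𝒜' ℬ' : Type*} [Category 𝒜] [Category ℬ] [Category 𝒜'] [Category ℬ']
    (W₁ : MorphismProperty 𝒜) (W₂ : MorphismProperty ℬ)
    (L₁ : 𝒜 ⥤ 𝒜') (L₂ : ℬ ⥤ ℬ')
    [L₁.IsLocalization W₁] [L₂.IsLocalization W₂]
    (F : 𝒜 ⥤ ℬ) (G : ℬ ⥤ 𝒜) (adj : F ⊣ G)
    (F' : 𝒜' ⥤ ℬ') (G' : ℬ' ⥤ 𝒜')
    (eF : L₁ ⋙ F' ≅ F ⋙ L₂) (eG : L₂ ⋙ G' ≅ G ⋙ L₁) :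
    ((G'.Full ∧ G'.Faithful) ↔ ∀ Y, IsIso (L₂.map (adj.counit.app Y))) ∧
    ((F'.Full ∧ F'.Faithful) ↔ ∀ X, IsIso (L₁.map (adj.unit.app X))) := by
  let : CatCommSq F L₁ L₂ F' := ⟨eF.symm⟩
  let : CatCommSq G L₂ L₁ G' := ⟨eG.symm⟩
  let adj' : F' ⊣ G' := adj.localization L₁ W₁ L₂ W₂ F' G'
  exact ⟨(rightAdjoint_full_and_faithful_iff_isIso_counit adj').trans
      (isIso_localization_counit_iff W₁ W₂ L₁ L₂ adj F' G'),
    (leftAdjoint_full_and_faithful_iff_isIso_unit adj').trans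
      (isIso_localization_unit_iff W₁ W₂ L₁ L₂ adj F' G')⟩

/-- Given localization functors `L₁ : 𝒜 ⥤ 𝒜'` and `L₂ : ℬ ⥤ ℬ'` with respect to classes of
morphisms `W₁` and `W₂`, an adjunction `F ⊣ G` with `F` sending `W₁` into `W₂` and `G`
sending `W₂` into `W₁`, and induced functors `F' : 𝒜' ⥤ ℬ'` and `G' : ℬ' ⥤ 𝒜'` (characterized
by `F' ∘ L₁ ≅ L₂ ∘ F` and `G' ∘ L₂ ≅ L₁ ∘ G`): if `G` is fully faithful then so is `G'`, and
if `F` is fully faithful then so is `F'`. -/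
theorem stmt19 {𝒜 ℬ 𝒜' ℬ' : Type*} [Category 𝒜] [Category ℬ] [Category 𝒜'] [Category ℬ']
    (W₁ : MorphismProperty 𝒜) (W₂ : MorphismProperty ℬ)
    (L₁ : 𝒜 ⥤ 𝒜') (L₂ : ℬ ⥤ ℬ')
    [L₁.IsLocalization W₁] [L₂.IsLocalization W₂]
    (F : 𝒜 ⥤ ℬ) (G : ℬ ⥤ 𝒜) (adj : F ⊣ G)
    (hF : ∀ ⦃X Y : 𝒜⦄ (f : X ⟶ Y), W₁ f → W₂ (F.map f))
    (hG : ∀ ⦃X Y : ℬ⦄ (f : X ⟶ Y), W₂ f → W₁ (G.map f))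
    (F' : 𝒜' ⥤ ℬ') (G' : ℬ' ⥤ 𝒜')
    (eF : L₁ ⋙ F' ≅ F ⋙ L₂) (eG : L₂ ⋙ G' ≅ G ⋙ L₁) :
    ((G.Full ∧ G.Faithful) → (G'.Full ∧ G'.Faithful)) ∧
    ((F.Full ∧ F.Faithful) → (F'.Full ∧ F'.Faithful)) := by
  have ⟨hG', hF'⟩ := stmt19_general W₁ W₂ L₁ L₂ F G adj F' G' eF eG
  exact ⟨fun ⟨_, _⟩ => hG'.2 fun _ => inferInstance, fun ⟨_, _⟩ => hF'.2 fun _ => inferInstance⟩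
end
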